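/- Let d ≥ 1 and for R > 0 define ψ_R : ℝ^d → (0,∞) by ψ_R(x) = 1/(R(1+|x|²/R²)). Then there exists a constant C depending only on d (independent of R) such that for every R > 0 and all measurable g, f : ℝ^d → ℂ: (i) ∫_{ℝ^d} |g(x)|² ψ_R(x) dx ≤ C·‖g‖²_X, and (ii) ‖f‖²_{X*} ≤ C·∫_{ℝ^d} |f(x)|² ψ_R(x)^{−1} dx. -/

import Mathlib

noncomputable section
open MeasureTheory Metric Set ENNReal

abbrev Ed (d : ℕ) := EuclideanSpace ℝ (Fin d)

/-- partial derivative of a complex valued function -/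
def pd {d : ℕ} (u : Ed d → ℂ) (i : Fin d) (x : Ed d) : ℂ :=
  fderiv ℝ u x (EuclideanSpace.single i 1)

/-- Laplacian of a complex valued function -/
def lap {d : ℕ} (u : Ed d → ℂ) (x : Ed d) : ℂ :=
  ∑ i, fderiv ℝ (pd u i) x (EuclideanSpace.single i 1)

/-- squared norm of the gradient, as an extended nonnegative real -/
def gradSq {d : ℕ} (u : Ed d → ℂ) (x : Ed d) : ℝ≥0∞ :=
  ∑ i, (‖pd u i x‖₊ : ℝ≥0∞) ^ 2

/-- |u(x)|² as an extended nonnegative real -/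
def usq {d : ℕ} (u : Ed d → ℂ) (x : Ed d) : ℝ≥0∞ := (‖u x‖₊ : ℝ≥0∞) ^ 2

/-- radial derivative ∂_r V (x) = (x/|x|)·∇V(x) -/
def radialDeriv {d : ℕ} (V : Ed d → ℝ) (x : Ed d) : ℝ :=
  fderiv ℝ V x x / ‖x‖

/-- Morrey–Campanato type quantity sup_{R>0} (1/R) ∫_{B(0,R)} g -/
def nX2 {d : ℕ} (g : Ed d → ℝ≥0∞) : ℝ≥0∞ :=
  ⨆ (R : ℝ) (_ : 0 < R), (ENNReal.ofReal R)⁻¹ * ∫⁻ x in ball (0 : Ed d) R, g x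

/-- dyadic shell C_j -/
def shell (d : ℕ) (j : ℤ) : Set (Ed d) := {x | (2:ℝ)^j < ‖x‖ ∧ ‖x‖ ≤ (2:ℝ)^(j+1)}

/-- the dual norm ‖f‖_{X*} applied to g = |f|² -/
def nXstar {d : ℕ} (g : Ed d → ℝ≥0∞) : ℝ≥0∞ :=
  ∑' j : ℤ, (ENNReal.ofReal ((2:ℝ)^(j+1)) * ∫⁻ x in shell d j, g x) ^ (1/2 : ℝ)

/-- the index j₀ with 2^{j₀} < ρ ≤ 2^{j₀+1} -/
def jIdx (ρ : ℝ) : ℤ := ⌈Real.logb 2 ρ⌉ - 1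

/-- sup_{R ≥ ρ} (1/R)∫_{B(0,R)} g -/
def nX2r {d : ℕ} (ρ : ℝ) (g : Ed d → ℝ≥0∞) : ℝ≥0∞ :=
  ⨆ (R : ℝ) (_ : ρ ≤ R), (ENNReal.ofReal R)⁻¹ * ∫⁻ x in ball (0 : Ed d) R, g x

/-- the dual norm ‖f‖_{X*_ρ} applied to g = |f|² -/
def nXstarr {d : ℕ} (ρ : ℝ) (g : Ed d → ℝ≥0∞) : ℝ≥0∞ :=
  (∑' j : {j : ℤ // jIdx ρ ≤ j},
    (ENNReal.ofReal ((2:ℝ)^((j:ℤ)+1)) * ∫⁻ x in shell d (j:ℤ), g x) ^ (1/2 : ℝ))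
  + (ENNReal.ofReal ρ * ∫⁻ x in ball (0 : Ed d) ρ, g x) ^ (1/2 : ℝ)

/-- integral of g over the sphere of radius R w.r.t. (d-1)-dimensional Hausdorff measure -/
def sphInt {d : ℕ} (R : ℝ) (g : Ed d → ℝ≥0∞) : ℝ≥0∞ :=
  ∫⁻ x in Metric.sphere (0 : Ed d) R, g x ∂(μH[(d:ℝ) - 1])


/-- the weight ψ_R(x) = 1/(R(1+|x|²/R²)) -/
def psiR {d : ℕ} (R : ℝ) (x : Ed d) : ℝ := 1 / (R * (1 + ‖x‖ ^ 2 / R ^ 2))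

/-!
A weight `w` is compared with constants `a j` on the dyadic shells `C_j`, and both bounds are
governed by the single sum `S = ∑_j 2^(j+1) a j`. Write `g` for the squared modulus. If `w ≤ a j`
on `C_j`, then `∫ g w ≤ ∑_j a j ∫_{C_j} g ≤ S * nX2 g`, since `C_j` lies in the closed ball of
radius `2^(j+1)`. If `1 ≤ a j * w` on `C_j`, then Cauchy–Schwarz applied to
`2^(j+1) ∫_{C_j} g ≤ (2^(j+1) a j) (∫_{C_j} g w)` gives `(nXstar g)² ≤ S ∫ g w`.

For the weights `ψ_R` and `ψ_R⁻¹` respectively, let `a j` be the value of `ψ_R` on the sphere of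
radius `2^j`. Then `2^j a j ≤ min (2^j / R) (R / 2^j)`, so `S` is dominated by a two-sided
geometric series centred at `log₂ R`, whose sum does not depend on `R`.
-/

lemma hasSum_half_pow_natAbs : HasSum (fun m : ℤ ↦ (1 / 2 : ℝ) ^ m.natAbs) 3 := by
  have hnonneg : HasSum (fun n : ℕ ↦ (1 / 2 : ℝ) ^ (n : ℤ).natAbs) 2 := by
    simpa only [Int.natAbs_natCast] using hasSum_geometric_two
  have hneg : HasSum (fun n : ℕ ↦ (1 / 2 : ℝ) ^ (-((n : ℤ) + 1)).natAbs) (2 * (1 / 2)) := by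
    have natAbs_eq (n : ℕ) : (-((n : ℤ) + 1)).natAbs = n + 1 := by omega
    simpa only [natAbs_eq, pow_succ] using hasSum_geometric_two.mul_right (1 / 2 : ℝ)
  rw [show (3 : ℝ) = 2 + 2 * (1 / 2) by norm_num]
  exact hnonneg.of_nat_of_neg_add_one hneg

lemma sq_tsum_rpow_half_mul_le {ι : Type*} (a b : ι → ℝ≥0∞) :
    (∑' i, (a i * b i) ^ (1 / 2 : ℝ)) ^ 2 ≤ (∑' i, a i) * ∑' i, b i := by
  let _ : MeasurableSpace ι := ⊤
  have sq_rpow_half (t : ℝ≥0∞) : (t ^ (1 / 2 : ℝ)) ^ (2 : ℝ) = t := by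
    rw [← ENNReal.rpow_mul]; norm_num
  have holder := ENNReal.lintegral_mul_le_Lp_mul_Lq (Measure.count : Measure ι)
    Real.HolderConjugate.two_two (f := fun i ↦ a i ^ (1 / 2 : ℝ))
    (g := fun i ↦ b i ^ (1 / 2 : ℝ)) measurable_from_top.aemeasurable
    measurable_from_top.aemeasurable
  simp only [lintegral_count, Pi.mul_apply, sq_rpow_half] at holder
  simp only [ENNReal.mul_rpow_of_nonneg _ _ (by norm_num : (0 : ℝ) ≤ 1 / 2)]
  calc (∑' i, a i ^ (1 / 2 : ℝ) * b i ^ (1 / 2 : ℝ)) ^ 2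
      ≤ ((∑' i, a i) ^ (1 / 2 : ℝ) * (∑' i, b i) ^ (1 / 2 : ℝ)) ^ 2 := by gcongr
    _ = (∑' i, a i) * ∑' i, b i := by
        rw [mul_pow, ← ENNReal.rpow_two, ← ENNReal.rpow_two, sq_rpow_half, sq_rpow_half]

section Shells

variable {d : ℕ}

lemma shell_eq_preimage_norm (j : ℤ) :
    shell d j = norm ⁻¹' Ioc ((2 : ℝ) ^ j) (2 ^ (j + 1)) := rfl

lemma measurableSet_shell (j : ℤ) : MeasurableSet (shell d j) :=
  measurable_norm measurableSet_Ioc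

lemma pairwise_disjoint_shell : Pairwise (Function.onFun Disjoint (shell d)) := fun _ _ hij ↦
  ((zpow_right_mono₀ (one_le_two (α := ℝ))).pairwise_disjoint_on_Ioc_succ hij).preimage norm

lemma iUnion_shell : ⋃ j, shell d j = {0}ᶜ := by
  ext x
  simp only [mem_iUnion, shell_eq_preimage_norm, mem_preimage, mem_compl_singleton_iff]
  constructor
  · rintro ⟨j, hj, -⟩
    exact norm_pos_iff.1 (lt_trans (by positivity) hj)
  · exact fun hx ↦ exists_mem_Ioc_zpow (norm_pos_iff.2 hx) one_lt_two

lemma tsum_setLIntegral_shell (g : Ed d → ℝ≥0∞) :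
    ∑' j, ∫⁻ x in shell d j, g x = ∫⁻ x in {0}ᶜ, g x := by
  rw [← iUnion_shell, lintegral_iUnion measurableSet_shell pairwise_disjoint_shell]

lemma setLIntegral_ball_le_mul_nX2 (g : Ed d → ℝ≥0∞) {r : ℝ} (hr : 0 < r) :
    ∫⁻ x in ball 0 r, g x ≤ ENNReal.ofReal r * nX2 g := by
  rw [← ENNReal.inv_mul_le_iff (by simpa using hr) ENNReal.ofReal_ne_top]
  exact le_iSup₂_of_le r hr le_rfl

lemma setLIntegral_shell_le_mul_nX2 (g : Ed d → ℝ≥0∞) (j : ℤ) :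
    ∫⁻ x in shell d j, g x ≤ ENNReal.ofReal (2 ^ (j + 1)) * nX2 g := by
  have hr : (0 : ℝ) < 2 ^ (j + 1) := by positivity
  have hnull : volume (sphere (0 : Ed d) (2 ^ (j + 1))) = 0 :=
    Measure.addHaar_sphere_of_ne_zero _ _ hr.ne'
  calc ∫⁻ x in shell d j, g x
      ≤ ∫⁻ x in ball 0 (2 ^ (j + 1)) ∪ sphere 0 (2 ^ (j + 1)), g x := by
        refine lintegral_mono_set fun x hx ↦ ?_
        rw [ball_union_sphere, mem_closedBall_zero_iff]
        exact hx.2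
    _ = ∫⁻ x in ball 0 (2 ^ (j + 1)), g x :=
        setLIntegral_congr (union_ae_eq_left_of_ae_eq_empty (ae_eq_empty.2 hnull))
    _ ≤ ENNReal.ofReal (2 ^ (j + 1)) * nX2 g := setLIntegral_ball_le_mul_nX2 g hr

variable {w : Ed d → ℝ≥0∞} {a : ℤ → ℝ}

lemma lintegral_mul_le_tsum_mul_nX2 [Nontrivial (Ed d)]
    (hw : ∀ j, ∀ x ∈ shell d j, w x ≤ ENNReal.ofReal (a j)) (g : Ed d → ℝ≥0∞) :
    ∫⁻ x, g x * w x ≤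
      (∑' j, ENNReal.ofReal (2 ^ (j + 1)) * ENNReal.ofReal (a j)) * nX2 g := by
  have hshell (j : ℤ) : ∫⁻ x in shell d j, g x * w x ≤
      ENNReal.ofReal (2 ^ (j + 1)) * ENNReal.ofReal (a j) * nX2 g :=
    calc ∫⁻ x in shell d j, g x * w x
        ≤ ∫⁻ x in shell d j, g x * ENNReal.ofReal (a j) :=
          setLIntegral_mono' (measurableSet_shell j) fun x hx ↦ by gcongr; exact hw j x hx
      _ = (∫⁻ x in shell d j, g x) * ENNReal.ofReal (a j) :=
          lintegral_mul_const' _ _ ENNReal.ofReal_ne_top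
      _ ≤ ENNReal.ofReal (2 ^ (j + 1)) * nX2 g * ENNReal.ofReal (a j) := by
          gcongr; exact setLIntegral_shell_le_mul_nX2 g j
      _ = ENNReal.ofReal (2 ^ (j + 1)) * ENNReal.ofReal (a j) * nX2 g := mul_right_comm _ _ _
  calc ∫⁻ x, g x * w x
      = ∑' j, ∫⁻ x in shell d j, g x * w x := by
        rw [tsum_setLIntegral_shell, restrict_compl_singleton]
    _ ≤ ∑' j, ENNReal.ofReal (2 ^ (j + 1)) * ENNReal.ofReal (a j) * nX2 g :=
        ENNReal.tsum_le_tsum hshell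
    _ = (∑' j, ENNReal.ofReal (2 ^ (j + 1)) * ENNReal.ofReal (a j)) * nX2 g :=
        ENNReal.tsum_mul_right

lemma nXstar_sq_le_tsum_mul_lintegral
    (hw : ∀ j, ∀ x ∈ shell d j, 1 ≤ ENNReal.ofReal (a j) * w x) (g : Ed d → ℝ≥0∞) :
    nXstar g ^ 2 ≤
      (∑' j, ENNReal.ofReal (2 ^ (j + 1)) * ENNReal.ofReal (a j)) * ∫⁻ x, g x * w x := by
  have hshell (j : ℤ) : ∫⁻ x in shell d j, g x ≤
      ENNReal.ofReal (a j) * ∫⁻ x in shell d j, g x * w x := by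
    rw [← lintegral_const_mul' _ _ ENNReal.ofReal_ne_top]
    refine setLIntegral_mono' (measurableSet_shell j) fun x hx ↦ ?_
    rw [mul_left_comm]
    exact le_mul_of_one_le_right' (hw j x hx)
  calc nXstar g ^ 2
      ≤ (∑' j, (ENNReal.ofReal (2 ^ (j + 1)) * ENNReal.ofReal (a j) *
          ∫⁻ x in shell d j, g x * w x) ^ (1 / 2 : ℝ)) ^ 2 := by
        unfold nXstar
        simp only [mul_assoc]
        gcongr with j
        exact hshell j
    _ ≤ (∑' j, ENNReal.ofReal (2 ^ (j + 1)) * ENNReal.ofReal (a j)) *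
          ∑' j, ∫⁻ x in shell d j, g x * w x := sq_tsum_rpow_half_mul_le _ _
    _ ≤ (∑' j, ENNReal.ofReal (2 ^ (j + 1)) * ENNReal.ofReal (a j)) * ∫⁻ x, g x * w x := by
        rw [tsum_setLIntegral_shell]
        exact mul_le_mul_right (setLIntegral_le_lintegral _ _) _

end Shells

/-- The radial profile of `ψ_R`, so that `ψ_R(x) = psiProfile R ‖x‖`. -/
def psiProfile (R r : ℝ) : ℝ := 1 / (R * (1 + r ^ 2 / R ^ 2))

section Profile

variable {R : ℝ}

lemma psiR_eq_psiProfile_norm {d : ℕ} (R : ℝ) (x : Ed d) : psiR R x = psiProfile R ‖x‖ := rfl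

lemma psiProfile_pos (hR : 0 < R) (r : ℝ) : 0 < psiProfile R r := by
  unfold psiProfile; positivity

lemma antitoneOn_psiProfile (hR : 0 < R) : AntitoneOn (psiProfile R) (Ici 0) := by
  intro r hr s _ hrs
  have hr₀ : 0 ≤ r := hr
  unfold psiProfile
  gcongr

lemma mul_psiProfile_le_div (hR : 0 < R) {r : ℝ} (hr : 0 ≤ r) : r * psiProfile R r ≤ r / R := by
  rw [psiProfile, mul_one_div]
  gcongr
  exact le_mul_of_one_le_right hR.le (le_add_of_nonneg_right (by positivity))

lemma mul_psiProfile_le_div_swap (hR : 0 < R) {r : ℝ} (hr : 0 < r) :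
    r * psiProfile R r ≤ R / r := by
  have hle : r ^ 2 / R ≤ R * (1 + r ^ 2 / R ^ 2) := by
    have heq : R * (1 + r ^ 2 / R ^ 2) = R + r ^ 2 / R := by field_simp
    rw [heq]
    exact le_add_of_nonneg_left hR.le
  calc r * psiProfile R r ≤ r * (1 / (r ^ 2 / R)) := by unfold psiProfile; gcongr
    _ = R / r := by field_simp

lemma two_zpow_mul_psiProfile_le {k : ℤ} (hk : R ∈ Ico ((2 : ℝ) ^ k) (2 ^ (k + 1))) (m : ℤ) :
    2 ^ (m + k + 1) * psiProfile R (2 ^ (m + k)) ≤ 4 * (1 / 2) ^ m.natAbs := by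
  obtain ⟨hkR, hRk⟩ := hk
  have hR : 0 < R := lt_of_lt_of_le (by positivity) hkR
  suffices h : 2 ^ (m + k) * psiProfile R (2 ^ (m + k)) ≤ 2 * (1 / 2) ^ m.natAbs by
    rw [zpow_add_one₀ two_ne_zero]
    linarith
  obtain ⟨n, rfl | rfl⟩ := m.eq_nat_or_neg
  · calc (2 : ℝ) ^ ((n : ℤ) + k) * psiProfile R (2 ^ ((n : ℤ) + k))
        ≤ R / 2 ^ ((n : ℤ) + k) := mul_psiProfile_le_div_swap hR (by positivity)
      _ ≤ 2 ^ (k + 1) / 2 ^ ((n : ℤ) + k) := by gcongr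
      _ = 2 * (1 / 2) ^ (n : ℤ).natAbs := by
        rw [zpow_add_one₀ two_ne_zero, zpow_add₀ two_ne_zero, zpow_natCast, Int.natAbs_natCast,
          one_div_pow]
        field_simp
  · calc (2 : ℝ) ^ (-(n : ℤ) + k) * psiProfile R (2 ^ (-(n : ℤ) + k))
        ≤ 2 ^ (-(n : ℤ) + k) / R := mul_psiProfile_le_div hR (by positivity)
      _ ≤ 2 ^ (-(n : ℤ) + k) / 2 ^ k := by gcongr
      _ = (1 / 2) ^ (-(n : ℤ)).natAbs := by
        rw [zpow_add₀ two_ne_zero, mul_div_cancel_right₀ _ (by positivity), zpow_neg,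
          zpow_natCast, Int.natAbs_neg, Int.natAbs_natCast, one_div_pow, one_div]
      _ ≤ 2 * (1 / 2) ^ (-(n : ℤ)).natAbs := le_mul_of_one_le_left (by positivity) one_le_two

lemma tsum_two_zpow_mul_psiProfile_le (hR : 0 < R) :
    ∑' j : ℤ, ENNReal.ofReal (2 ^ (j + 1)) * ENNReal.ofReal (psiProfile R (2 ^ j)) ≤ 12 := by
  obtain ⟨k, hk⟩ := exists_mem_Ico_zpow hR one_lt_two
  have hsum : HasSum (fun m : ℤ ↦ 4 * (1 / 2 : ℝ) ^ m.natAbs) 12 := by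
    rw [show (12 : ℝ) = 4 * 3 by norm_num]
    exact hasSum_half_pow_natAbs.mul_left 4
  calc ∑' j : ℤ, ENNReal.ofReal (2 ^ (j + 1)) * ENNReal.ofReal (psiProfile R (2 ^ j))
      = ∑' m : ℤ, ENNReal.ofReal (2 ^ (m + k + 1) * psiProfile R (2 ^ (m + k))) := by
        rw [← (Equiv.addRight k).tsum_eq]
        refine tsum_congr fun m ↦ ?_
        rw [Equiv.coe_addRight, ENNReal.ofReal_mul (by positivity)]
    _ ≤ ∑' m : ℤ, ENNReal.ofReal (4 * (1 / 2) ^ m.natAbs) :=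
        ENNReal.tsum_le_tsum fun m ↦ ENNReal.ofReal_le_ofReal (two_zpow_mul_psiProfile_le hk m)
    _ = 12 := by
        rw [← ENNReal.ofReal_tsum_of_nonneg (fun m ↦ by positivity) hsum.summable, hsum.tsum_eq]
        norm_num

lemma psiR_le_psiProfile_of_mem_shell {d : ℕ} (hR : 0 < R) {j : ℤ} {x : Ed d}
    (hx : x ∈ shell d j) : psiR R x ≤ psiProfile R (2 ^ j) := by
  rw [psiR_eq_psiProfile_norm]
  exact antitoneOn_psiProfile hR (by simp only [mem_Ici]; positivity) (norm_nonneg x) hx.1.le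

lemma one_le_psiProfile_mul_inv_psiR_of_mem_shell {d : ℕ} (hR : 0 < R) {j : ℤ} {x : Ed d}
    (hx : x ∈ shell d j) : 1 ≤ psiProfile R (2 ^ j) * (psiR R x)⁻¹ := by
  rw [← div_eq_mul_inv]
  exact (one_le_div (psiProfile_pos hR ‖x‖)).2 (psiR_le_psiProfile_of_mem_shell hR hx)

lemma lintegral_mul_psiR_le_mul_nX2 {d : ℕ} [Nontrivial (Ed d)] (hR : 0 < R)
    (g : Ed d → ℝ≥0∞) : ∫⁻ x, g x * ENNReal.ofReal (psiR R x) ≤ 12 * nX2 g :=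
  calc ∫⁻ x, g x * ENNReal.ofReal (psiR R x)
      ≤ (∑' j, ENNReal.ofReal (2 ^ (j + 1)) * ENNReal.ofReal (psiProfile R (2 ^ j))) * nX2 g :=
        lintegral_mul_le_tsum_mul_nX2
          (fun _ _ hx ↦ ENNReal.ofReal_le_ofReal (psiR_le_psiProfile_of_mem_shell hR hx)) g
    _ ≤ 12 * nX2 g := by gcongr; exact tsum_two_zpow_mul_psiProfile_le hR

lemma nXstar_sq_le_mul_lintegral_inv_psiR {d : ℕ} (hR : 0 < R) (f : Ed d → ℝ≥0∞) :
    nXstar f ^ 2 ≤ 12 * ∫⁻ x, f x * ENNReal.ofReal ((psiR R x)⁻¹) := by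
  have hweight (j : ℤ) (x : Ed d) (hx : x ∈ shell d j) :
      1 ≤ ENNReal.ofReal (psiProfile R (2 ^ j)) * ENNReal.ofReal ((psiR R x)⁻¹) := by
    rw [← ENNReal.ofReal_mul (psiProfile_pos hR _).le, ENNReal.one_le_ofReal]
    exact one_le_psiProfile_mul_inv_psiR_of_mem_shell hR hx
  calc nXstar f ^ 2
      ≤ (∑' j, ENNReal.ofReal (2 ^ (j + 1)) * ENNReal.ofReal (psiProfile R (2 ^ j))) *
          ∫⁻ x, f x * ENNReal.ofReal ((psiR R x)⁻¹) := nXstar_sq_le_tsum_mul_lintegral hweight f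
    _ ≤ 12 * ∫⁻ x, f x * ENNReal.ofReal ((psiR R x)⁻¹) := by
        gcongr; exact tsum_two_zpow_mul_psiProfile_le hR

end Profile

theorem stmt_19_general {d : ℕ} (hd : 1 ≤ d) {R : ℝ} (hR : 0 < R) (g f : Ed d → ℝ≥0∞) :
    ∫⁻ x, g x * ENNReal.ofReal (psiR R x) ≤ 12 * nX2 g ∧
      nXstar f ^ 2 ≤ 12 * ∫⁻ x, f x * ENNReal.ofReal ((psiR R x)⁻¹) := by
  have : NeZero d := ⟨Nat.one_le_iff_ne_zero.1 hd⟩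
  exact ⟨lintegral_mul_psiR_le_mul_nX2 hR g, nXstar_sq_le_mul_lintegral_inv_psiR hR f⟩

/-- comparison of the weighted L²(ψ_R) norms with the
Morrey–Campanato norms, uniformly in R. -/
theorem stmt_19 (d : ℕ) (hd : 1 ≤ d) :
    ∃ C : ℝ, 0 < C ∧
      ∀ (R : ℝ), 0 < R →
      ∀ (g f : Ed d → ℂ), Measurable g → Measurable f →
      (∫⁻ x, usq g x * ENNReal.ofReal (psiR R x)) ≤ ENNReal.ofReal C * nX2 (usq g)
      ∧
      (nXstar (usq f)) ^ 2 ≤ ENNReal.ofReal C *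
        ∫⁻ x, usq f x * ENNReal.ofReal ((psiR R x)⁻¹) := by
  refine ⟨12, by norm_num, fun R hR g f _ _ ↦ ?_⟩
  simpa using stmt_19_general hd hR (usq g) (usq f)
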